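/- Let w ≥ 2 be even, let n be an integer with 0 < n < w, set ñ = w − n, let D > 1 and let h be an integer with D ∤ h. Define S_{2,h}(z) = 2·Σ_{b ∈ ℤ} 1/(z + h/D + b)^{ñ+1} for z in the upper half-plane, and F_{2,h}(X) = ∫₀^{i∞} S_{2,h}(z)(X−z)^w dz + (−1)^{n−1}·∫₀^{i∞} S_{2,−h}(z)(X+z)^w dz. Then for every complex number X: F_{2,h}(X) = −c_n·(2i)^{w+1}·B_{n+1}({h/D} + X)/(n+1), where c_n = (−1)^n·4πi·(2i)^{−w−1}·C(w,n). -/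

import Mathlib

/-!
Let `φ` be the `m`-th derivative of `π cot (π z)`. On the upper half-plane `S_{2,h}` is a multiple
of `φ (z + h / D)` with `m = w - n`, and since `φ` has parity `(-1) ^ (m + 1)`, the two half-line
integrals glue to a single integral `∫ φ (t + i y) (X - i y) ^ w dy` over the whole line, where
`t = h / D`.

Integration by parts lowers `m` and `w` together until `m = 1`. For `X = 0`, the integrals with
`m = 1` form an Appell sequence in `t` whose zeroth term is the constant `-2 π`, and the duplication
formula of `cot` becomes the multiplication formula of the Bernoulli polynomials. On `(0, 1)` these
properties determine the sequence, which is therefore `-2 π B_k (t)`. Periodicity in `t` and the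
binomial expansion in `X` give the general case.
-/

open MeasureTheory Complex Real

noncomputable section

/-- The contour integral `∫₀^{i∞} F(z) dz` along the positive imaginary axis `z = iy`. -/
def intI (F : ℂ → ℂ) : ℂ := Complex.I * ∫ y in Set.Ioi (0 : ℝ), F (Complex.I * y)

/-- The constant `c_n = (−1)^n·4πi·(2i)^{−w−1}·C(w,n)`. -/
def cconst (w n : ℕ) : ℂ :=
  (-1) ^ n * 4 * Real.pi * Complex.I * (2 * Complex.I) ^ (-(w : ℤ) - 1) * (w.choose n)

/-- The `k`-th Bernoulli polynomial evaluated at a complex number. -/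
def bpoly (k : ℕ) (x : ℂ) : ℂ := Polynomial.aeval x (Polynomial.bernoulli k)

/-- `S_{2,h}(z) = 2 Σ_{b ∈ ℤ} 1/(z + h/D + b)^{ñ+1}`. -/
def S2 (D w n : ℕ) (h : ℤ) (z : ℂ) : ℂ :=
  2 * ∑' b : ℤ, 1 / (z + (h : ℂ) / D + b) ^ (w - n + 1)

/-! ### Bernoulli polynomials -/

lemma bernoulliFun_two_mul (k : ℕ) (t : ℝ) :
    bernoulliFun k (2 * t) = 2 ^ k / 2 * (bernoulliFun k t + bernoulliFun k (t + 1 / 2)) := by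
  simpa [Finset.sum_range_succ] using bernoulliFun_mul k two_ne_zero t

lemma eq_bernoulliFun_smul_of_hasDerivAt_of_two_mul {E : Type*} [NormedAddCommGroup E]
    [NormedSpace ℝ E] {A : ℕ → ℝ → E} {c : E}
    (hzero : ∀ t ∈ Set.Ioo (0 : ℝ) 1, A 0 t = c)
    (hderiv : ∀ k, ∀ t ∈ Set.Ioo (0 : ℝ) 1, HasDerivAt (A (k + 1)) ((k + 1 : ℝ) • A k t) t)
    (hdup : ∀ k, ∀ t ∈ Set.Ioo (0 : ℝ) (1 / 2),
      A k (2 * t) = (2 ^ k / 2 : ℝ) • (A k t + A k (t + 1 / 2))) (k : ℕ) :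
    ∀ t ∈ Set.Ioo (0 : ℝ) 1, A k t = bernoulliFun k t • c := by
  induction k with
  | zero => simpa using hzero
  | succ k ih =>
    set d : ℝ → E := fun t => A (k + 1) t - bernoulliFun (k + 1) t • c with hd
    have hd' : ∀ t ∈ Set.Ioo (0 : ℝ) 1, HasDerivAt d 0 t := fun t ht => by
      have h := (hderiv k t ht).sub ((hasDerivAt_bernoulliFun (k + 1) t).smul_const c)
      rwa [ih t ht, smul_smul, Nat.cast_add_one, Nat.add_sub_cancel, sub_self] at h
    have hconst {s t : ℝ} (hs : s ∈ Set.Ioo (0 : ℝ) 1) (ht : t ∈ Set.Ioo (0 : ℝ) 1) :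
        d s = d t :=
      isOpen_Ioo.is_const_of_deriv_eq_zero isPreconnected_Ioo
        (fun x hx => (hd' x hx).differentiableAt.differentiableWithinAt)
        (fun x hx => (hd' x hx).deriv) hs ht
    have hd_dup : d (2 * (1 / 4)) = (2 ^ (k + 1) / 2 : ℝ) • (d (1 / 4) + d (1 / 4 + 1 / 2)) := by
      simp only [hd, hdup (k + 1) (1 / 4) (by norm_num), bernoulliFun_two_mul]
      module
    -- Duplication determines the constant of integration, which is `2 ^ (k + 1)` times itself.
    have hscale : (2 ^ (k + 1) - 1 : ℝ) • d (1 / 2) = 0 := by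
      rw [hconst (s := 2 * (1 / 4)) (t := 1 / 2) (by norm_num) (by norm_num),
        hconst (s := 1 / 4) (t := 1 / 2) (by norm_num) (by norm_num),
        hconst (s := 1 / 4 + 1 / 2) (t := 1 / 2) (by norm_num) (by norm_num)] at hd_dup
      rw [sub_smul, one_smul, sub_eq_zero]
      nth_rw 2 [hd_dup]
      module
    have hpow : (2 ^ (k + 1) - 1 : ℝ) ≠ 0 :=
      sub_ne_zero.mpr (one_lt_pow₀ one_lt_two k.succ_ne_zero).ne'
    intro t ht
    rw [← sub_eq_zero]
    exact (hconst ht (by norm_num)).trans ((smul_eq_zero_iff_right hpow).mp hscale)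

lemma hasseDeriv_map {R S : Type*} [Semiring R] [Semiring S] (f : R →+* S) (i : ℕ)
    (p : Polynomial R) :
    Polynomial.hasseDeriv i (p.map f) = (Polynomial.hasseDeriv i p).map f := by
  ext n
  simp [Polynomial.hasseDeriv_coeff]

lemma hasseDeriv_bernoulli (k i : ℕ) :
    Polynomial.hasseDeriv i (Polynomial.bernoulli k) =
      k.choose i • Polynomial.bernoulli (k - i) := by
  ext n
  rw [Polynomial.hasseDeriv_coeff, Polynomial.coeff_smul, Polynomial.coeff_bernoulli,
    Polynomial.coeff_bernoulli, nsmul_eq_mul]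
  rcases le_or_gt (n + i) k with hk | hk
  · have hchoose : (k.choose (n + i) : ℚ) * (n + i).choose i = k.choose i * (k - i).choose n := by
      exact_mod_cast (Nat.choose_mul (Nat.le_add_left i n)).trans (by rw [Nat.add_sub_cancel])
    rw [if_pos hk, if_pos (by omega), Nat.sub_sub, add_comm i n]
    linear_combination bernoulli (k - (n + i)) * hchoose
  · rw [if_neg hk.not_ge, mul_zero]
    rcases le_or_gt i k with hi | hi
    · rw [if_neg (by omega), mul_zero]
    · rw [Nat.choose_eq_zero_of_lt hi, Nat.cast_zero, zero_mul]

lemma aeval_add_bernoulli {A : Type*} [CommRing A] [Algebra ℚ A] (k : ℕ) (x y : A) :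
    Polynomial.aeval (x + y) (Polynomial.bernoulli k) =
      ∑ i ∈ Finset.range (k + 1),
        x ^ i * Polynomial.aeval y (Polynomial.bernoulli (k - i)) * k.choose i := by
  have hdeg : (Polynomial.taylor y ((Polynomial.bernoulli k).map (algebraMap ℚ A))).natDegree <
      k + 1 := by
    rw [Polynomial.natDegree_taylor, Nat.lt_succ_iff, Polynomial.natDegree_le_iff_coeff_eq_zero]
    intro i hi
    rw [Polynomial.coeff_map, Polynomial.coeff_bernoulli, if_neg hi.not_ge, map_zero]
  rw [← Polynomial.eval_map_algebraMap, ← Polynomial.taylor_eval,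
    Polynomial.eval_eq_sum_range' hdeg]
  refine Finset.sum_congr rfl fun i _ => ?_
  rw [Polynomial.taylor_coeff, hasseDeriv_map, hasseDeriv_bernoulli,
    Polynomial.eval_map_algebraMap, map_nsmul, nsmul_eq_mul]
  ring

lemma bpoly_ofReal (k : ℕ) (t : ℝ) : bpoly k t = bernoulliFun k t := by
  rw [bpoly, bernoulliFun, Polynomial.eval_map_algebraMap]
  exact Polynomial.aeval_algebraMap_apply ℂ t _

lemma bpoly_add (k : ℕ) (x y : ℂ) :
    bpoly k (x + y) = ∑ i ∈ Finset.range (k + 1), x ^ i * bpoly (k - i) y * k.choose i :=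
  aeval_add_bernoulli k x y

/-! ### Bounds on vertical lines -/

lemma abs_sin_mul_cosh_le_norm_sin (x y : ℝ) :
    |Real.sin x| * Real.cosh y ≤ ‖Complex.sin (x + y * I)‖ := by
  have hre : (Complex.sin (x + y * I)).re = Real.sin x * Real.cosh y := by
    rw [Complex.sin_add_mul_I, ← Complex.ofReal_sin, ← Complex.ofReal_cosh,
      ← Complex.ofReal_cos, ← Complex.ofReal_sinh]
    simp [-Complex.ofReal_sin, -Complex.ofReal_cos, -Complex.ofReal_cosh, -Complex.ofReal_sinh]
  rw [← abs_of_pos (Real.cosh_pos y), ← abs_mul, ← hre]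
  exact Complex.abs_re_le_norm _

lemma norm_cos_le_cosh (x y : ℝ) : ‖Complex.cos (x + y * I)‖ ≤ Real.cosh y := by
  rw [Complex.cos, Real.cosh_eq, norm_div, Complex.norm_ofNat]
  gcongr
  refine (norm_add_le _ _).trans_eq ?_
  simp [Complex.norm_exp, add_comm]

lemma mul_cosh_le_norm_sin_pi_mul {δ t : ℝ} (ht : δ ≤ |Real.sin (π * t)|) (y : ℝ) :
    δ * Real.cosh (π * y) ≤ ‖Complex.sin (π * (t + y * I))‖ := by
  have h := abs_sin_mul_cosh_le_norm_sin (π * t) (π * y)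
  push_cast at h
  rw [mul_add, ← mul_assoc]
  exact (mul_le_mul_of_nonneg_right ht (Real.cosh_pos _).le).trans h

lemma sin_pi_mul_vertical_ne_zero {t : ℝ} (ht : Real.sin (π * t) ≠ 0) (y : ℝ) :
    Complex.sin (π * (t + y * I)) ≠ 0 :=
  norm_pos_iff.mp <| (mul_pos (abs_pos.mpr ht) (Real.cosh_pos _)).trans_le
    (mul_cosh_le_norm_sin_pi_mul le_rfl y)

lemma sin_pi_mul_eq_zero_iff {t : ℝ} : Real.sin (π * t) = 0 ↔ Int.fract t = 0 := by
  rw [Real.sin_eq_zero_iff, Int.fract_eq_zero_iff, mul_comm π t]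
  exact exists_congr fun n => mul_left_inj' Real.pi_ne_zero

lemma sin_pi_mul_ne_zero_of_mem_Ioo {t : ℝ} (ht : t ∈ Set.Ioo (0 : ℝ) 1) :
    Real.sin (π * t) ≠ 0 := by
  rw [Ne, sin_pi_mul_eq_zero_iff, Int.fract_eq_self.mpr ⟨ht.1.le, ht.2⟩]
  exact ht.1.ne'

lemma exp_abs_le_two_mul_cosh (x : ℝ) : Real.exp |x| ≤ 2 * Real.cosh x := by
  rw [← Real.cosh_abs, Real.cosh_eq]
  linarith [Real.exp_pos (-|x|)]

lemma integrable_norm_sub_mul_I_pow_div_cosh (k : ℕ) (X : ℂ) :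
    Integrable fun y : ℝ => ‖X - y * I‖ ^ k / Real.cosh (π * y) := by
  have hcosh (y : ℝ) : 0 < Real.cosh (π * y) := Real.cosh_pos _
  refine (integrable_inv_one_add_sq.const_mul
    ((k + 2).factorial * Real.exp (‖X‖ + 1) * 2)).mono' ?_ (.of_forall fun y => ?_)
  · exact Continuous.aestronglyMeasurable
      (by fun_prop (disch := exact fun y => (hcosh y).ne'))
  have hX : ‖X - y * I‖ ≤ ‖X‖ + 1 + |y| := by
    have h := norm_sub_le X (y * I)
    simp only [norm_mul, Complex.norm_real, Complex.norm_I, mul_one, Real.norm_eq_abs] at h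
    linarith
  have hy : 1 + y ^ 2 ≤ (‖X‖ + 1 + |y|) ^ 2 := by
    nlinarith [norm_nonneg X, abs_nonneg y, sq_abs y]
  have hexp : Real.exp |y| ≤ 2 * Real.cosh (π * y) := by
    refine le_trans (Real.exp_le_exp.mpr ?_) (exp_abs_le_two_mul_cosh _)
    rw [abs_mul, abs_of_pos Real.pi_pos]
    nlinarith [abs_nonneg y, Real.pi_gt_three]
  rw [Real.norm_of_nonneg (div_nonneg (by positivity) (hcosh y).le), ← div_eq_mul_inv,
    div_le_div_iff₀ (hcosh y) (by positivity)]
  calc ‖X - y * I‖ ^ k * (1 + y ^ 2) ≤ (‖X‖ + 1 + |y|) ^ k * (‖X‖ + 1 + |y|) ^ 2 := by gcongr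
    _ = (‖X‖ + 1 + |y|) ^ (k + 2) := (pow_add _ _ _).symm
    _ ≤ (k + 2).factorial * Real.exp (‖X‖ + 1 + |y|) :=
        (div_le_iff₀' (by positivity)).mp (Real.pow_div_factorial_le_exp _ (by positivity) _)
    _ = (k + 2).factorial * Real.exp (‖X‖ + 1) * Real.exp |y| := by
        rw [Real.exp_add]; ring
    _ ≤ (k + 2).factorial * Real.exp (‖X‖ + 1) * 2 * Real.cosh (π * y) := by
        rw [mul_assoc _ (2 : ℝ)]; gcongr

/-! ### The cotangent and its derivatives -/

/-- The function `π cot (π z)`. Its `m`-th derivative is `(-1) ^ m * m!` times the series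
`∑ b : ℤ, 1 / (z + b) ^ (m + 1)`. -/
def piCot (z : ℂ) : ℂ := π * Complex.cot (π * z)

lemma piCot_neg (z : ℂ) : piCot (-z) = -piCot z := by
  simp [piCot, Complex.cot, div_neg]

lemma piCot_add_one (z : ℂ) : piCot (z + 1) = piCot z := by
  simp [piCot, Complex.cot, mul_add, Complex.cos_add_pi, Complex.sin_add_pi]

lemma iteratedDeriv_piCot_neg (m : ℕ) (z : ℂ) :
    iteratedDeriv m piCot (-z) = (-1) ^ (m + 1) * iteratedDeriv m piCot z := by
  have h := iteratedDeriv_comp_neg m piCot (-z)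
  simp only [piCot_neg, iteratedDeriv_fun_neg, neg_neg, smul_eq_mul] at h
  rw [pow_succ, mul_neg_one, neg_mul, ← h, neg_neg]

lemma iteratedDeriv_piCot_add_one (m : ℕ) (z : ℂ) :
    iteratedDeriv m piCot (z + 1) = iteratedDeriv m piCot z := by
  have h := iteratedDeriv_comp_add_const m piCot 1
  simp only [piCot_add_one] at h
  exact (congrFun h z).symm

lemma iteratedDeriv_piCot_eq_tsum {m : ℕ} (hm : 1 ≤ m) {z : ℂ} (hz : 0 < z.im) :
    iteratedDeriv m piCot z = (-1) ^ m * m.factorial * ∑' b : ℤ, 1 / (z + b) ^ (m + 1) := by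
  have hz' : z ∈ UpperHalfPlane.upperHalfPlaneSet := hz
  rw [← iteratedDerivWithin_cot_pi_mul_eq_mul_tsum_div_pow hm hz']
  exact (iteratedDerivWithin_of_isOpen UpperHalfPlane.isOpen_upperHalfPlaneSet hz').symm

lemma hasDerivAt_sin_pi_mul (z : ℂ) :
    HasDerivAt (fun z : ℂ => Complex.sin (π * z)) (π * Complex.cos (π * z)) z := by
  simpa [mul_comm] using ((hasDerivAt_id z).const_mul (π : ℂ)).csin

lemma analyticAt_piCot {z : ℂ} (hz : Complex.sin (π * z) ≠ 0) : AnalyticAt ℂ piCot z := by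
  unfold piCot Complex.cot
  fun_prop (disch := exact hz)

lemma hasDerivAt_iteratedDeriv_piCot (m : ℕ) {z : ℂ} (hz : Complex.sin (π * z) ≠ 0) :
    HasDerivAt (iteratedDeriv m piCot) (iteratedDeriv (m + 1) piCot z) z := by
  rw [iteratedDeriv_succ, iteratedDeriv_eq_iterate]
  exact ((analyticAt_piCot hz).iterated_deriv m).differentiableAt.hasDerivAt

lemma deriv_piCot {z : ℂ} (hz : Complex.sin (π * z) ≠ 0) :
    deriv piCot z = -(π / Complex.sin (π * z)) ^ 2 := by
  have hcos : HasDerivAt (fun z : ℂ => Complex.cos (π * z)) (-(π * Complex.sin (π * z))) z := by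
    simpa [mul_comm] using ((hasDerivAt_id z).const_mul (π : ℂ)).ccos
  refine ((hcos.fun_div (hasDerivAt_sin_pi_mul z) hz).const_mul (π : ℂ)).deriv.trans ?_
  field_simp
  linear_combination -Complex.sin_sq_add_cos_sq (π * z)

lemma deriv_piCot_add_half {z : ℂ} (hz : Complex.sin (π * (2 * z)) ≠ 0) :
    deriv piCot z + deriv piCot (z + 1 / 2) = 4 * deriv piCot (2 * z) := by
  have hdouble : Complex.sin (π * (2 * z)) =
      2 * Complex.sin (π * z) * Complex.cos (π * z) := by
    rw [mul_left_comm, Complex.sin_two_mul]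
  have hhalf : Complex.sin (π * (z + 1 / 2)) = Complex.cos (π * z) := by
    rw [mul_add, mul_one_div, Complex.sin_add_pi_div_two]
  obtain ⟨hsin, hcos⟩ : Complex.sin (π * z) ≠ 0 ∧ Complex.cos (π * z) ≠ 0 := by
    simpa [hdouble] using hz
  rw [deriv_piCot hsin, deriv_piCot (hhalf ▸ hcos), deriv_piCot hz, hdouble, hhalf]
  field_simp
  linear_combination -4 * Complex.sin_sq_add_cos_sq (π * z)

lemma exists_polynomial_iteratedDeriv_piCot (m : ℕ) :
    ∃ Q : Polynomial ℂ, ∀ z : ℂ, Complex.sin (π * z) ≠ 0 →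
      iteratedDeriv (m + 1) piCot z = Q.eval (piCot z) / Complex.sin (π * z) ^ 2 := by
  induction m with
  | zero =>
    refine ⟨Polynomial.C (-π ^ 2), fun z hz => ?_⟩
    rw [zero_add, iteratedDeriv_one, deriv_piCot hz, Polynomial.eval_C]
    ring
  | succ m ih =>
    obtain ⟨Q, hQ⟩ := ih
    refine ⟨-(Q.derivative * (Polynomial.X ^ 2 + Polynomial.C (π ^ 2 : ℂ)) +
      2 * Polynomial.X * Q), fun z hz => ?_⟩
    have hcot : HasDerivAt piCot (-(π / Complex.sin (π * z)) ^ 2) z :=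
      deriv_piCot hz ▸ (analyticAt_piCot hz).differentiableAt.hasDerivAt
    have hquot := ((Q.hasDerivAt (piCot z)).comp z hcot).fun_div
      ((hasDerivAt_sin_pi_mul z).fun_pow 2) (pow_ne_zero 2 hz)
    have hnear : ∀ᶠ x in nhds z, Complex.sin (π * x) ≠ 0 :=
      (hasDerivAt_sin_pi_mul z).continuousAt.eventually_ne hz
    rw [(hasDerivAt_iteratedDeriv_piCot (m + 1) hz).unique
      (hquot.congr_of_eventuallyEq (hnear.mono hQ))]
    simp only [piCot, Complex.cot, Polynomial.eval_neg, Polynomial.eval_add, Polynomial.eval_mul,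
      Polynomial.eval_pow, Polynomial.eval_X, Polynomial.eval_C, Polynomial.eval_ofNat,
      Function.comp_apply]
    field_simp
    linear_combination (π * Q.derivative.eval (π * Complex.cos (π * z) /
      Complex.sin (π * z))) * Complex.sin_sq_add_cos_sq (π * z)

lemma norm_piCot_le {δ t : ℝ} (hδ : 0 < δ) (ht : δ ≤ |Real.sin (π * t)|) (y : ℝ) :
    ‖piCot (t + y * I)‖ ≤ π / δ := by
  have := Real.cosh_pos (π * y)
  have hcos : ‖Complex.cos (π * (t + y * I))‖ ≤ Real.cosh (π * y) := by
    simpa [mul_add, mul_assoc] using norm_cos_le_cosh (π * t) (π * y)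
  rw [piCot, Complex.cot, norm_mul, norm_div, Complex.norm_real,
    Real.norm_of_nonneg Real.pi_pos.le]
  calc π * (‖Complex.cos (π * (t + y * I))‖ / ‖Complex.sin (π * (t + y * I))‖)
    _ ≤ π * (Real.cosh (π * y) / (δ * Real.cosh (π * y))) := by
        gcongr
        exact mul_cosh_le_norm_sin_pi_mul ht y
    _ = π / δ := by field_simp

lemma exists_norm_iteratedDeriv_piCot_le (m : ℕ) {δ : ℝ} (hδ : 0 < δ) :
    ∃ C : ℝ, ∀ t y : ℝ, δ ≤ |Real.sin (π * t)| →
      ‖iteratedDeriv (m + 1) piCot (t + y * I)‖ ≤ C / Real.cosh (π * y) := by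
  -- `Q (piCot z)` stays bounded on these lines, so all the decay comes from `1 / sin (π z) ^ 2`.
  obtain ⟨Q, hQ⟩ := exists_polynomial_iteratedDeriv_piCot m
  obtain ⟨B, hB⟩ := (isCompact_closedBall (0 : ℂ) (π / δ)).exists_bound_of_continuousOn
    Q.continuous.continuousOn
  refine ⟨B / δ ^ 2, fun t y ht => ?_⟩
  have hBt := hB _ (mem_closedBall_zero_iff.mpr (norm_piCot_le hδ ht y))
  have hB0 : 0 ≤ B := (norm_nonneg _).trans hBt
  have := Real.cosh_pos (π * y)
  have ht0 : Real.sin (π * t) ≠ 0 := abs_pos.mp (hδ.trans_le ht)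
  rw [hQ _ (sin_pi_mul_vertical_ne_zero ht0 y), norm_div, norm_pow, div_div]
  gcongr
  calc δ ^ 2 * Real.cosh (π * y) ≤ δ ^ 2 * Real.cosh (π * y) ^ 2 := by
        gcongr
        exact le_self_pow₀ (Real.one_le_cosh _) two_ne_zero
    _ = (δ * Real.cosh (π * y)) ^ 2 := (mul_pow _ _ _).symm
    _ ≤ ‖Complex.sin (π * (t + y * I))‖ ^ 2 := by
        gcongr
        exact mul_cosh_le_norm_sin_pi_mul ht y

lemma piCot_add_pi_mul_I {z : ℂ} (hz : Complex.sin (π * z) ≠ 0) :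
    piCot z + π * I = π * Complex.exp (π * z * I) / Complex.sin (π * z) := by
  rw [piCot, Complex.cot, ← Complex.cos_add_sin_I]
  field_simp

lemma tendsto_piCot_vertical_atTop {t : ℝ} (ht : Real.sin (π * t) ≠ 0) :
    Filter.Tendsto (fun y : ℝ => piCot (t + y * I)) Filter.atTop (nhds (-(π * I))) := by
  have hlim : Filter.Tendsto (fun y => π * Real.exp (-(π * y)) / |Real.sin (π * t)|)
      Filter.atTop (nhds (π * 0 / |Real.sin (π * t)|)) :=
    ((Real.tendsto_exp_neg_atTop_nhds_zero.comp
      (Filter.tendsto_id.const_mul_atTop Real.pi_pos)).const_mul π).div_const _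
  rw [mul_zero, zero_div] at hlim
  rw [tendsto_iff_norm_sub_tendsto_zero]
  refine squeeze_zero (fun _ => norm_nonneg _) (fun y => ?_) hlim
  have hsin : |Real.sin (π * t)| ≤ ‖Complex.sin (π * (t + y * I))‖ :=
    (le_mul_of_one_le_right (abs_nonneg _) (Real.one_le_cosh _)).trans
      (mul_cosh_le_norm_sin_pi_mul le_rfl y)
  rw [sub_neg_eq_add, piCot_add_pi_mul_I (sin_pi_mul_vertical_ne_zero ht y), norm_div, norm_mul,
    Complex.norm_real, Real.norm_of_nonneg Real.pi_pos.le, Complex.norm_exp]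
  have := abs_pos.mpr ht
  gcongr
  simp

lemma tendsto_piCot_vertical_atBot {t : ℝ} (ht : Real.sin (π * t) ≠ 0) :
    Filter.Tendsto (fun y : ℝ => piCot (t + y * I)) Filter.atBot (nhds (π * I)) := by
  have ht_neg : Real.sin (π * -t) ≠ 0 := by rwa [mul_neg, Real.sin_neg, neg_ne_zero]
  have h := ((tendsto_piCot_vertical_atTop ht_neg).comp Filter.tendsto_neg_atBot_atTop).neg
  rw [neg_neg] at h
  refine h.congr fun y => ?_
  rw [Function.comp_apply, ← piCot_neg]
  push_cast
  ring_nf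

lemma hasDerivAt_iteratedDeriv_piCot_horizontal (m : ℕ) {t : ℝ} (ht : Real.sin (π * t) ≠ 0)
    (y : ℝ) :
    HasDerivAt (fun s : ℝ => iteratedDeriv m piCot (s + y * I))
      (iteratedDeriv (m + 1) piCot (t + y * I)) t := by
  have hline : HasDerivAt (fun s : ℝ => (s : ℂ) + y * I) 1 t :=
    Complex.ofRealCLM.hasDerivAt.add_const _
  have h := (hasDerivAt_iteratedDeriv_piCot m (sin_pi_mul_vertical_ne_zero ht y)).comp t hline
  rwa [mul_one] at h

lemma hasDerivAt_iteratedDeriv_piCot_vertical (m : ℕ) {t : ℝ} (ht : Real.sin (π * t) ≠ 0)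
    (y : ℝ) :
    HasDerivAt (fun y : ℝ => iteratedDeriv m piCot (t + y * I))
      (iteratedDeriv (m + 1) piCot (t + y * I) * I) y := by
  have hline : HasDerivAt (fun y : ℝ => (t : ℂ) + y * I) I y := by
    simpa using (Complex.ofRealCLM.hasDerivAt.mul_const I).const_add (t : ℂ)
  exact (hasDerivAt_iteratedDeriv_piCot m (sin_pi_mul_vertical_ne_zero ht y)).comp y hline

lemma continuous_iteratedDeriv_piCot_vertical (m : ℕ) {t : ℝ} (ht : Real.sin (π * t) ≠ 0) :
    Continuous fun y : ℝ => iteratedDeriv m piCot (t + y * I) :=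
  continuous_iff_continuousAt.mpr fun y =>
    (hasDerivAt_iteratedDeriv_piCot_vertical m ht y).continuousAt

/-! ### Moments of the derivatives of the cotangent -/

/-- The integral of `φ(z) (t + X - z) ^ k` along the vertical line `z = t + i y`, with respect to
`y`, where `φ` is the `m`-th derivative of `piCot`. -/
def cotMoment (m k : ℕ) (t : ℝ) (X : ℂ) : ℂ :=
  ∫ y : ℝ, iteratedDeriv m piCot (t + y * I) * (X - y * I) ^ k

lemma exists_integrable_bound_cotMoment_integrand (m k : ℕ) {δ : ℝ} (hδ : 0 < δ) (X : ℂ) :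
    ∃ g : ℝ → ℝ, Integrable g ∧ ∀ t y : ℝ, δ ≤ |Real.sin (π * t)| →
      ‖iteratedDeriv (m + 1) piCot (t + y * I) * (X - y * I) ^ k‖ ≤ g y := by
  obtain ⟨C, hC⟩ := exists_norm_iteratedDeriv_piCot_le m hδ
  refine ⟨_, (integrable_norm_sub_mul_I_pow_div_cosh k X).const_mul C, fun t y ht => ?_⟩
  rw [norm_mul, norm_pow, mul_div_left_comm, mul_comm]
  gcongr
  exact hC t y ht

lemma continuous_cotMoment_integrand (m k : ℕ) {t : ℝ} (ht : Real.sin (π * t) ≠ 0) (X : ℂ) :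
    Continuous fun y : ℝ => iteratedDeriv m piCot (t + y * I) * (X - y * I) ^ k :=
  (continuous_iteratedDeriv_piCot_vertical m ht).mul (by fun_prop)

lemma integrable_cotMoment_integrand (m k : ℕ) {t : ℝ} (ht : Real.sin (π * t) ≠ 0) (X : ℂ) :
    Integrable fun y : ℝ => iteratedDeriv (m + 1) piCot (t + y * I) * (X - y * I) ^ k := by
  obtain ⟨g, hg, hle⟩ := exists_integrable_bound_cotMoment_integrand m k (abs_pos.mpr ht) X
  exact hg.mono' (continuous_cotMoment_integrand (m + 1) k ht X).aestronglyMeasurable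
    (.of_forall fun y => hle t y le_rfl)

lemma cotMoment_periodic (m k : ℕ) (X : ℂ) : Function.Periodic (fun t => cotMoment m k t X) 1 := by
  intro t
  simp only [cotMoment, Complex.ofReal_add, Complex.ofReal_one, add_right_comm _ (1 : ℂ),
    iteratedDeriv_piCot_add_one]

lemma cotMoment_fract (m k : ℕ) (t : ℝ) (X : ℂ) :
    cotMoment m k (Int.fract t) X = cotMoment m k t X := by
  have h := (cotMoment_periodic m k X).sub_int_mul_eq ⌊t⌋ (x := t)
  rwa [mul_one] at h

lemma cotMoment_add_two_succ (m k : ℕ) {t : ℝ} (ht : Real.sin (π * t) ≠ 0) (X : ℂ) :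
    cotMoment (m + 2) (k + 1) t X = (k + 1) * cotMoment (m + 1) k t X := by
  have hu (y : ℝ) : HasDerivAt (fun y : ℝ => (X - y * I) ^ (k + 1))
      ((k + 1) * (X - y * I) ^ k * -I) y := by
    have hline : HasDerivAt (fun y : ℝ => X - y * I) (-I) y := by
      simpa using (Complex.ofRealCLM.hasDerivAt.mul_const I).const_sub X
    simpa using hline.fun_pow (k + 1)
  have hparts := integral_mul_deriv_eq_deriv_mul_of_integrable (fun y _ => hu y)
    (fun y _ => hasDerivAt_iteratedDeriv_piCot_vertical (m + 1) ht y)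
    (((integrable_cotMoment_integrand (m + 1) (k + 1) ht X).mul_const I).congr
      (.of_forall fun y => by simp only [Pi.mul_apply]; ring))
    (((integrable_cotMoment_integrand m k ht X).const_mul ((k + 1) * -I)).congr
      (.of_forall fun y => by simp only [Pi.mul_apply]; ring))
    ((integrable_cotMoment_integrand m (k + 1) ht X).congr
      (.of_forall fun y => by simp only [Pi.mul_apply]; ring))
  apply mul_right_cancel₀ Complex.I_ne_zero
  calc cotMoment (m + 2) (k + 1) t X * I
      = ∫ y : ℝ, (X - y * I) ^ (k + 1) * (iteratedDeriv (m + 2) piCot (t + y * I) * I) := by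
        rw [cotMoment, ← integral_mul_const]
        congr! 2 with _
        ring
    _ = ∫ y : ℝ, iteratedDeriv (m + 1) piCot (t + y * I) * (X - y * I) ^ k * ((k + 1) * I) := by
        rw [hparts, ← integral_neg]
        congr! 2 with _
        ring
    _ = (k + 1) * cotMoment (m + 1) k t X * I := by
        rw [integral_mul_const, cotMoment]
        ring

lemma cotMoment_succ_add (m k : ℕ) {t : ℝ} (ht : Real.sin (π * t) ≠ 0) (X : ℂ) :
    cotMoment (m + 1) (k + m) t X = (k + m).descFactorial m * cotMoment 1 k t X := by
  induction m with
  | zero => simp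
  | succ m ih =>
    rw [← add_assoc k, cotMoment_add_two_succ m (k + m) ht, ih, Nat.succ_descFactorial_succ]
    push_cast
    ring

lemma hasDerivAt_cotMoment (m k : ℕ) {t : ℝ} (ht : Real.sin (π * t) ≠ 0) (X : ℂ) :
    HasDerivAt (fun s => cotMoment (m + 1) k s X) (cotMoment (m + 2) k t X) t := by
  have hδ : 0 < |Real.sin (π * t)| / 2 := half_pos (abs_pos.mpr ht)
  have hne {s : ℝ} (hs : |Real.sin (π * t)| / 2 < |Real.sin (π * s)|) :
      Real.sin (π * s) ≠ 0 := abs_pos.mp (hδ.trans hs)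
  have hnhds : {s : ℝ | |Real.sin (π * t)| / 2 < |Real.sin (π * s)|} ∈ nhds t :=
    (isOpen_lt (by fun_prop) (by fun_prop)).mem_nhds (half_lt_self (abs_pos.mpr ht))
  obtain ⟨g, hg, hle⟩ := exists_integrable_bound_cotMoment_integrand (m + 1) k hδ X
  refine (hasDerivAt_integral_of_dominated_loc_of_deriv_le hnhds
    (Filter.eventually_of_mem hnhds fun s hs =>
      (continuous_cotMoment_integrand (m + 1) k (hne hs) X).aestronglyMeasurable)
    (integrable_cotMoment_integrand m k ht X)
    (continuous_cotMoment_integrand (m + 2) k ht X).aestronglyMeasurable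
    (.of_forall fun y s hs => hle s y (le_of_lt hs)) hg
    (.of_forall fun y s hs => ?_)).2
  exact (hasDerivAt_iteratedDeriv_piCot_horizontal (m + 1) (hne hs) y).mul_const _

lemma cotMoment_one_zero {t : ℝ} (ht : Real.sin (π * t) ≠ 0) (X : ℂ) :
    cotMoment 1 0 t X = -2 * π := by
  have hderiv (y : ℝ) : HasDerivAt (fun y : ℝ => -I * piCot (t + y * I))
      (iteratedDeriv 1 piCot (t + y * I) * (X - y * I) ^ 0) y := by
    have h := (hasDerivAt_iteratedDeriv_piCot_vertical 0 ht y).const_mul (-I)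
    simp only [iteratedDeriv_zero] at h
    refine h.congr_deriv ?_
    linear_combination -(iteratedDeriv 1 piCot (t + y * I)) * Complex.I_mul_I
  rw [cotMoment, integral_of_hasDerivAt_of_tendsto hderiv (integrable_cotMoment_integrand 0 0 ht X)
    ((tendsto_piCot_vertical_atBot ht).const_mul (-I))
    ((tendsto_piCot_vertical_atTop ht).const_mul (-I))]
  linear_combination (2 * π) * Complex.I_mul_I

lemma cotMoment_one_two_mul (k : ℕ) {t : ℝ} (ht : Real.sin (π * (2 * t)) ≠ 0) (X : ℂ) :
    cotMoment 1 k (2 * t) (2 * X) =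
      2 ^ k / 2 * (cotMoment 1 k t X + cotMoment 1 k (t + 1 / 2) X) := by
  have hdouble : Real.sin (π * (2 * t)) = 2 * Real.sin (π * t) * Real.cos (π * t) := by
    rw [mul_left_comm, Real.sin_two_mul]
  have hhalf : Real.sin (π * (t + 1 / 2)) = Real.cos (π * t) := by
    rw [mul_add, mul_one_div, Real.sin_add_pi_div_two]
  obtain ⟨hsin, hcos⟩ : Real.sin (π * t) ≠ 0 ∧ Real.cos (π * t) ≠ 0 := by
    simpa [hdouble] using ht
  have hdup (y : ℝ) : 4 * iteratedDeriv 1 piCot ((2 * t : ℝ) + (2 * y : ℝ) * I) =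
      iteratedDeriv 1 piCot (t + y * I) + iteratedDeriv 1 piCot ((t + 1 / 2 : ℝ) + y * I) := by
    have h := sin_pi_mul_vertical_ne_zero ht (2 * y)
    push_cast at h ⊢
    rw [mul_assoc 2, ← mul_add 2] at h ⊢
    rw [iteratedDeriv_one, add_right_comm, deriv_piCot_add_half h]
  have hscale := Measure.integral_comp_mul_left (fun y : ℝ =>
    iteratedDeriv 1 piCot ((2 * t : ℝ) + y * I) * (2 * X - y * I) ^ k) 2
  rw [abs_of_pos (by norm_num), eq_inv_smul_iff₀ two_ne_zero, Complex.real_smul] at hscale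
  rw [cotMoment, cotMoment, cotMoment, ← integral_add (integrable_cotMoment_integrand 0 k hsin X)
    (integrable_cotMoment_integrand 0 k (hhalf ▸ hcos) X), ← hscale, ← integral_const_mul,
    ← integral_const_mul]
  congr! 2 with y
  have hpow : (2 * X - (2 * y : ℝ) * I) ^ k = 2 ^ k * (X - y * I) ^ k := by
    rw [← mul_pow]
    push_cast
    ring
  rw [hpow, ← add_mul, ← hdup y, Complex.ofReal_ofNat]
  ring

lemma cotMoment_one_zero_right (k : ℕ) :
    ∀ t ∈ Set.Ioo (0 : ℝ) 1, cotMoment 1 k t 0 = bernoulliFun k t • (-2 * π : ℂ) := by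
  refine eq_bernoulliFun_smul_of_hasDerivAt_of_two_mul (A := fun k t => cotMoment 1 k t 0)
    (fun t ht => cotMoment_one_zero (sin_pi_mul_ne_zero_of_mem_Ioo ht) 0) (fun k t ht => ?_)
    (fun k t ht => ?_) k
  · refine (hasDerivAt_cotMoment 0 (k + 1) (sin_pi_mul_ne_zero_of_mem_Ioo ht) 0).congr_deriv ?_
    rw [cotMoment_add_two_succ 0 k (sin_pi_mul_ne_zero_of_mem_Ioo ht), Complex.real_smul]
    push_cast
    rfl
  · have h := cotMoment_one_two_mul k (sin_pi_mul_ne_zero_of_mem_Ioo (t := 2 * t)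
      ⟨by linarith [ht.1], by linarith [ht.2]⟩) 0
    rw [mul_zero] at h
    rw [h, Complex.real_smul]
    push_cast
    rfl

lemma cotMoment_eq_sum (m k : ℕ) {t : ℝ} (ht : Real.sin (π * t) ≠ 0) (X : ℂ) :
    cotMoment (m + 1) k t X =
      ∑ i ∈ Finset.range (k + 1), X ^ i * cotMoment (m + 1) (k - i) t 0 * k.choose i := by
  simp only [cotMoment, ← integral_const_mul, ← integral_mul_const]
  rw [← integral_finsetSum _ fun i _ =>
    ((integrable_cotMoment_integrand m (k - i) ht 0).const_mul _).mul_const _]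
  congr! 2 with y
  rw [sub_eq_add_neg, add_pow, Finset.mul_sum]
  congr! 1 with i
  ring

lemma cotMoment_one (k : ℕ) {t : ℝ} (ht : Real.sin (π * t) ≠ 0) (X : ℂ) :
    cotMoment 1 k t X = -2 * π * bpoly k (Int.fract t + X) := by
  have hfract : Int.fract t ∈ Set.Ioo (0 : ℝ) 1 :=
    ⟨Int.fract_pos.mpr fun h => ht (sin_pi_mul_eq_zero_iff.mpr (by rw [Int.fract, ← h, sub_self])),
      Int.fract_lt_one t⟩
  rw [cotMoment_eq_sum 0 k ht, add_comm _ X, bpoly_add, Finset.mul_sum]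
  refine Finset.sum_congr rfl fun i _ => ?_
  rw [← cotMoment_fract, cotMoment_one_zero_right (k - i) _ hfract, bpoly_ofReal, Complex.real_smul]
  ring

lemma cotMoment_eq_integral_Ioi (m k : ℕ) {t : ℝ} (ht : Real.sin (π * t) ≠ 0) (X : ℂ) :
    cotMoment (m + 1) k t X =
      (∫ y in Set.Ioi (0 : ℝ), iteratedDeriv (m + 1) piCot (t + y * I) * (X - y * I) ^ k) +
      (-1) ^ m * ∫ y in Set.Ioi (0 : ℝ),
        iteratedDeriv (m + 1) piCot (-t + y * I) * (X + y * I) ^ k := by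
  have hint := integrable_cotMoment_integrand m k ht X
  rw [cotMoment, ← intervalIntegral.integral_Iic_add_Ioi (b := 0) hint.integrableOn
    hint.integrableOn, add_comm, ← neg_zero, ← integral_comp_neg_Ioi, neg_zero,
    ← integral_const_mul]
  congr! 3 with _ y
  have harg : (t : ℂ) + (-y : ℝ) * I = -(-t + y * I) := by push_cast; ring
  rw [harg, iteratedDeriv_piCot_neg]
  push_cast
  ring

/-! ### The period integrals -/

lemma S2_eq_iteratedDeriv_piCot (D w : ℕ) {n : ℕ} (hn : n < w) (h : ℤ) {z : ℂ} (hz : 0 < z.im) :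
    S2 D w n h z =
      2 * (-1) ^ (w - n) / (w - n).factorial * iteratedDeriv (w - n) piCot (z + h / D) := by
  have him : 0 < (z + (h : ℂ) / D).im := by
    have hreal : ((h : ℝ) / D : ℝ) = (h : ℂ) / D := by push_cast; rfl
    rwa [← hreal, Complex.add_im, Complex.ofReal_im, add_zero]
  have hfac : ((w - n).factorial : ℂ) ≠ 0 := Nat.cast_ne_zero.mpr (Nat.factorial_ne_zero _)
  have hsign : (-1 : ℂ) ^ (w - n) * (-1) ^ (w - n) = 1 := by rw [← mul_pow]; simp
  rw [S2, iteratedDeriv_piCot_eq_tsum (Nat.sub_pos_of_lt hn) him]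
  field_simp
  linear_combination -(∑' b : ℤ, 1 / (z + (h : ℂ) / D + b) ^ (w - n + 1)) * hsign

lemma intI_S2_mul (D n m : ℕ) (h : ℤ) (P : ℂ → ℂ) :
    intI (fun z => S2 D (n + (m + 1)) n h z * P z) =
      2 * I * (-1) ^ (m + 1) / (m + 1).factorial * ∫ y in Set.Ioi (0 : ℝ),
        iteratedDeriv (m + 1) piCot ((h / D : ℝ) + y * I) * P (y * I) := by
  rw [intI, ← integral_const_mul, ← integral_const_mul]
  refine setIntegral_congr_fun measurableSet_Ioi fun y hy => ?_
  have him : 0 < (I * y : ℂ).im := by simpa using hy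
  rw [S2_eq_iteratedDeriv_piCot D _ (by omega) h him, Nat.add_sub_cancel_left, mul_comm I (y : ℂ),
    add_comm (y * I)]
  push_cast
  ring

lemma intI_S2_add_intI_S2_neg (D n m k : ℕ) {h : ℤ} (ht : Real.sin (π * (h / D)) ≠ 0) (X : ℂ) :
    intI (fun z => S2 D (n + (m + 1)) n h z * (X - z) ^ k) +
      (-1) ^ m * intI (fun z => S2 D (n + (m + 1)) n (-h) z * (X + z) ^ k) =
    2 * I * (-1) ^ (m + 1) / (m + 1).factorial * cotMoment (m + 1) k (h / D) X := by
  rw [intI_S2_mul D n m h (fun z => (X - z) ^ k), intI_S2_mul D n m (-h) (fun z => (X + z) ^ k),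
    cotMoment_eq_integral_Ioi m k ht]
  push_cast
  rw [neg_div]
  ring

lemma sin_pi_mul_intCast_div_natCast_ne_zero {D : ℕ} (hD : D ≠ 0) {h : ℤ} (hh : ¬ (D : ℤ) ∣ h) :
    Real.sin (π * (h / D)) ≠ 0 := by
  rw [Ne, sin_pi_mul_eq_zero_iff, Int.fract_eq_zero_iff]
  rintro ⟨q, hq⟩
  rw [eq_div_iff (Nat.cast_ne_zero.mpr hD)] at hq
  exact hh ⟨q, by rw [mul_comm]; exact_mod_cast hq.symm⟩

lemma cconst_mul_two_mul_I_pow (w n : ℕ) :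
    cconst w n * (2 * I) ^ (w + 1) = (-1) ^ n * 4 * π * I * w.choose n := by
  have : (2 * I : ℂ) ≠ 0 := mul_ne_zero two_ne_zero Complex.I_ne_zero
  have hexp : (-(w : ℤ) - 1) = -((w + 1 : ℕ) : ℤ) := by push_cast; ring
  rw [cconst, hexp, zpow_neg, zpow_natCast]
  field_simp

lemma descFactorial_add_mul_succ (n m : ℕ) :
    (n + 1 + m).descFactorial m * (n + 1) = (m + 1).factorial * (n + 1 + m).choose n := by
  have hchoose := Nat.choose_succ_right_eq (n + 1 + m) n
  rw [show n + 1 + m - n = m + 1 by omega] at hchoose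
  rw [Nat.descFactorial_eq_factorial_mul_choose, Nat.choose_symm_add.symm, mul_assoc, hchoose,
    Nat.factorial_succ]
  ring

/-- the twisted period-polynomial contribution of the matrices with
`c = 0`: for `0 < n < w`, `D ∤ h`,
`F_{2,h}(X) = −c_n·(2i)^{w+1}·B_{n+1}({h/D} + X)/(n+1)`. -/
theorem F2_eval (w : ℕ) (hw : 2 ≤ w) (hwe : Even w) (n : ℕ) (hn0 : 0 < n) (hnw : n < w)
    (D : ℕ) (hD : 1 < D) (h : ℤ) (hh : ¬ (D : ℤ) ∣ h) (X : ℂ) :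
    intI (fun z => S2 D w n h z * (X - z) ^ w) +
      (-1 : ℂ) ^ (n - 1) * intI (fun z => S2 D w n (-h) z * (X + z) ^ w) =
    -cconst w n * (2 * Complex.I) ^ (w + 1) *
      bpoly (n + 1) (((Int.fract ((h : ℝ) / D) : ℝ) : ℂ) + X) / (n + 1) := by
  have ht := sin_pi_mul_intCast_div_natCast_ne_zero (by omega : D ≠ 0) hh
  obtain ⟨m, rfl⟩ : ∃ m, w = n + (m + 1) := ⟨w - n - 1, by omega⟩
  have hparity : (-1 : ℂ) ^ (n - 1) = (-1) ^ m := neg_one_pow_congr (by grind)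
  have hsign : (-1 : ℂ) ^ n = (-1) ^ (m + 1) := neg_one_pow_congr (by grind)
  have hw_split : n + (m + 1) = n + 1 + m := by ring
  have hmoment : cotMoment (m + 1) (n + (m + 1)) (h / D) X =
      (n + 1 + m).descFactorial m * (-2 * π * bpoly (n + 1) (Int.fract ((h : ℝ) / D) + X)) := by
    rw [hw_split, cotMoment_succ_add m (n + 1) ht, cotMoment_one (n + 1) ht]
  have hcoeff : ((n + 1 + m).descFactorial m : ℂ) * (n + 1) =
      (m + 1).factorial * (n + 1 + m).choose n := mod_cast descFactorial_add_mul_succ n m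
  have hfac : ((m + 1).factorial : ℂ) ≠ 0 := Nat.cast_ne_zero.mpr (Nat.factorial_ne_zero _)
  rw [hparity, intI_S2_add_intI_S2_neg D n m _ ht, hmoment,
    neg_mul (cconst _ _), cconst_mul_two_mul_I_pow, hsign, hw_split]
  field_simp [Nat.cast_add_one_ne_zero n]
  linear_combination (-4 * bpoly (n + 1) (Int.fract ((h : ℝ) / D) + X)) * hcoeff

end
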